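/- Let A ∈ ℝ^{I×J}, λ > 0, P*_λ = (A Aᵀ + λ I_I)⁻¹ A, and F_λ(P) = ‖I_J − Pᵀ A‖_F² + λ‖P‖_F². Let μ_1, …, μ_J ≥ 0 be the eigenvalues (with multiplicity) of the symmetric positive semidefinite matrix Aᵀ A. Then the minimum value of F_λ is F_λ(P*_λ) = J − ∑_{j=1}^J μ_j/(μ_j + λ). (Since μ_j = 0 for eigenvalues outside the rank of A, this equals J − ∑_{r=1}^{rank(A)} σ_r²/(σ_r² + λ) where σ_r are the nonzero singular values of A.) -/

import Mathlib

open Matrix BigOperators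

/-- Squared Frobenius norm of a real matrix. -/
noncomputable def frobSq {m n : Type*} [Fintype m] [Fintype n] (M : Matrix m n ℝ) : ℝ :=
  ∑ i, ∑ j, (M i j) ^ 2

/-- The regularized objective `F_λ(P) = ‖I_J − Pᵀ A‖_F² + λ‖P‖_F²`. -/
noncomputable def Fpinv {I J : ℕ} (A : Matrix (Fin I) (Fin J) ℝ) (lam : ℝ)
    (P : Matrix (Fin I) (Fin J) ℝ) : ℝ :=
  frobSq ((1 : Matrix (Fin J) (Fin J) ℝ) - Pᵀ * A) + lam * frobSq P

/-- The regularized minimizer `P*_λ = (A Aᵀ + λ I_I)⁻¹ A`. -/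
noncomputable def PstarId {I J : ℕ} (A : Matrix (Fin I) (Fin J) ℝ) (lam : ℝ) :
    Matrix (Fin I) (Fin J) ℝ :=
  (A * Aᵀ + lam • (1 : Matrix (Fin I) (Fin I) ℝ))⁻¹ * A

theorem frobSq_eq_trace {m n : Type*} [Fintype m] [Fintype n] (M : Matrix m n ℝ) :
    frobSq M = (Mᵀ * M).trace := by
  simp only [frobSq, Matrix.trace, Matrix.diag, Matrix.mul_apply, Matrix.transpose_apply]
  rw [Finset.sum_comm]
  simp only [pow_two]

theorem reg_posDef {m n : ℕ} (B : Matrix (Fin m) (Fin n) ℝ) (lam : ℝ) (hlam : 0 < lam) :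
    (B * Bᵀ + lam • (1 : Matrix (Fin m) (Fin m) ℝ)).PosDef := by
  have h1 : (B * Bᵀ).PosSemidef := by
    simpa using Matrix.posSemidef_self_mul_conjTranspose B
  exact Matrix.PosDef.posSemidef_add h1 (Matrix.PosDef.one.smul hlam)

theorem trace_part {I J : ℕ}
    (A : Matrix (Fin I) (Fin J) ℝ) (lam : ℝ) (hlam : 0 < lam) :
    Fpinv A lam (PstarId A lam) = (J : ℝ) - ((PstarId A lam)ᵀ * A).trace := by
  have hM : (A * Aᵀ + lam • (1 : Matrix (Fin I) (Fin I) ℝ)) * PstarId A lam = A := by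
    rw [PstarId, Matrix.mul_nonsing_inv_cancel_left]
    exact (Matrix.isUnit_iff_isUnit_det _).1 (reg_posDef A lam hlam).isUnit
  generalize PstarId A lam = P at *
  have h1 : (Pᵀ * A).trace = (Pᵀ * A * (Aᵀ * P)).trace + lam * (Pᵀ * P).trace := by
    conv_lhs => rw [← hM]
    simp [Matrix.add_mul, Matrix.mul_add, Matrix.mul_assoc]
  have h2 : (Aᵀ * P).trace = (Pᵀ * A).trace := by
    rw [← Matrix.trace_transpose]; simp
  rw [Fpinv, frobSq_eq_trace, frobSq_eq_trace]
  have h3 : (Aᵀ * P * (Pᵀ * A)).trace = (Pᵀ * A * (Aᵀ * P)).trace := Matrix.trace_mul_comm _ _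
  simp only [Matrix.transpose_sub, Matrix.transpose_one, Matrix.transpose_mul,
    Matrix.transpose_transpose, Matrix.sub_mul, Matrix.mul_sub, Matrix.one_mul, Matrix.mul_one,
    Matrix.trace_sub, Matrix.trace_one, Fintype.card_fin, h2, h3]
  linarith

/-- The minimum value of `F_λ` is `F_λ(P*_λ) = J − ∑_j μ_j/(μ_j + λ)`, where
`μ_1, …, μ_J ≥ 0` are the eigenvalues (with multiplicity) of `Aᵀ A`. -/
theorem Fpinv_min_value {I J : ℕ}
    (A : Matrix (Fin I) (Fin J) ℝ) (lam : ℝ) (hlam : 0 < lam)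
    (hH : (Aᵀ * A).IsHermitian) :
    Fpinv A lam (PstarId A lam) =
      (J : ℝ) - ∑ j, hH.eigenvalues j / (hH.eigenvalues j + lam) := by
  rw [trace_part A lam hlam]
  congr 1
  have hN : (Aᵀ * A + lam • (1 : Matrix (Fin J) (Fin J) ℝ)).PosDef := by
    simpa using reg_posDef Aᵀ lam hlam
  have hmu : ∀ j, 0 ≤ hH.eigenvalues j := by
    have : (Aᵀ * A).PosSemidef := by simpa using Matrix.posSemidef_conjTranspose_mul_self A
    exact fun j => this.eigenvalues_nonneg j
  have hdet := (Matrix.isUnit_iff_isUnit_det _).1 (reg_posDef A lam hlam).isUnit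
  have hX : (Aᵀ * A + lam • (1 : Matrix (Fin J) (Fin J) ℝ)) * ((PstarId A lam)ᵀ * A) = Aᵀ * A := by
    have hP : (PstarId A lam)ᵀ = Aᵀ * (A * Aᵀ + lam • (1 : Matrix (Fin I) (Fin I) ℝ))⁻¹ := by
      simp [PstarId, Matrix.transpose_nonsing_inv]
    have hc : (Aᵀ * A + lam • (1 : Matrix (Fin J) (Fin J) ℝ)) * Aᵀ
        = Aᵀ * (A * Aᵀ + lam • (1 : Matrix (Fin I) (Fin I) ℝ)) := by
      simp [Matrix.add_mul, Matrix.mul_add, Matrix.mul_assoc]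
    rw [hP, ← Matrix.mul_assoc, ← Matrix.mul_assoc, hc, Matrix.mul_nonsing_inv_cancel_right _ _ hdet]
  obtain ⟨U, V, hVU, hUV, hG⟩ : ∃ U V : Matrix (Fin J) (Fin J) ℝ, V * U = 1 ∧ U * V = 1 ∧
      Aᵀ * A = U * Matrix.diagonal hH.eigenvalues * V := by
    refine ⟨hH.eigenvectorUnitary, star (hH.eigenvectorUnitary : Matrix (Fin J) (Fin J) ℝ),
      by simp, by simp, ?_⟩
    have := hH.spectral_theorem
    rw [Unitary.conjStarAlgAut_apply] at this
    exact this
  generalize hH.eigenvalues = mu at *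
  have hY : (Aᵀ * A + lam • (1 : Matrix (Fin J) (Fin J) ℝ)) *
      (U * Matrix.diagonal (fun j => mu j / (mu j + lam)) * V) = Aᵀ * A := by
    have h1 : Aᵀ * A + lam • (1 : Matrix (Fin J) (Fin J) ℝ)
        = U * Matrix.diagonal (fun j => mu j + lam) * V := by
      have : Matrix.diagonal (fun j => mu j + lam)
          = Matrix.diagonal mu + lam • (1 : Matrix (Fin J) (Fin J) ℝ) := by
        rw [Matrix.smul_one_eq_diagonal, Matrix.diagonal_add]
      rw [this, hG, Matrix.mul_add, Matrix.add_mul]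
      simp [hUV]
    have h2 : Matrix.diagonal (fun j => mu j + lam) *
        Matrix.diagonal (fun j => mu j / (mu j + lam)) = Matrix.diagonal mu := by
      rw [Matrix.diagonal_mul_diagonal]
      congr 1
      funext j
      have := hmu j
      exact mul_div_cancel₀ _ (by positivity)
    rw [h1, hG, ← h2]
    simp only [Matrix.mul_assoc]
    rw [← Matrix.mul_assoc V U, hVU, Matrix.one_mul]
  have hXY := hN.isUnit.mul_left_cancel (hX.trans hY.symm)
  rw [hXY, Matrix.trace_mul_comm, ← Matrix.mul_assoc, hVU, Matrix.one_mul, Matrix.trace_diagonal]
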